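/- For every constant 0 < δ < 1 there exist a constant d > 0 and an integer N (both depending only on δ) such that the following holds for all n ≥ N. Let H = (V, E) be an unweighted graph equal to a star S_n plus a subgraph H[V'] = (V', E') supported on the n leaves V'. If H[V'] has no path cover 𝒫 with |𝒫| < δn, then for every edge set P ⊆ E' with |P| ≤ n − 1, T(S_n + P) ≤ (1 + d)^{−n} · T(F_n). -/

import Mathlib

open Matrix

/-- The Laplacian matrix of a weighted graph given by a weight function. -/
def lapG {V : Type*} [Fintype V] [DecidableEq V] (W : V → V → ℝ) : Matrix V V ℝ :=
  fun i j => if i = j then ∑ k, W i k else -(W i j)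

/-- The (weighted) number of spanning trees: determinant of the Laplacian with the
row and column of the last vertex removed. -/
def nst {n : ℕ} (W : Fin (n + 1) → Fin (n + 1) → ℝ) : ℝ :=
  ((lapG W).submatrix Fin.castSucc Fin.castSucc).det

/-- The star graph `S_n`: the central vertex is `Fin.last n`, joined to the `n`
leaves `0, …, n-1` by unit-weight edges. -/
def starW (n : ℕ) : Fin (n + 1) → Fin (n + 1) → ℝ :=
  fun i j => if i ≠ j ∧ (i = Fin.last n ∨ j = Fin.last n) then 1 else 0

/-- The fan graph `F_n`: the star `S_n` plus a path of `n - 1` unit-weight edges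
through the `n` leaves. -/
def fanW (n : ℕ) : Fin (n + 1) → Fin (n + 1) → ℝ :=
  fun i j => starW n i j +
    if ((i : ℕ) + 1 = (j : ℕ) ∧ j ≠ Fin.last n) ∨
       ((j : ℕ) + 1 = (i : ℕ) ∧ i ≠ Fin.last n) then 1 else 0

/-- The star `S_n` plus the set `P` of unit-weight edges between leaves. -/
def starPlusEdges (n : ℕ) (P : Finset (Sym2 (Fin n))) : Fin (n + 1) → Fin (n + 1) → ℝ :=
  fun i j => starW n i j +
    if ∃ a b : Fin n, i = a.castSucc ∧ j = b.castSucc ∧ s(a, b) ∈ P then 1 else 0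

/-- `Ps` is a path cover of the graph on the `n` leaves with edge set `E`:
each member is a nonempty duplicate-free list whose consecutive pairs are
edges of `E`, the members are pairwise vertex-disjoint, and every leaf is covered. -/
def IsPathCoverOf (n : ℕ) (E : Finset (Sym2 (Fin n))) (Ps : List (List (Fin n))) : Prop :=
  (∀ l ∈ Ps, l ≠ [] ∧ l.Nodup ∧ l.Chain' (fun a b => s(a, b) ∈ E)) ∧
    Ps.Pairwise (fun l₁ l₂ => ∀ x ∈ l₁, x ∉ l₂) ∧
    (∀ v : Fin n, ∃ l ∈ Ps, v ∈ l)

/-!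
The matrix tree theorem turns `T (S_n + P)` into the determinant of the grounded Laplacian of the
cone over `P`, and adding an edge `e` multiplies this determinant by one plus the effective
resistance of `e`. Start from the paths of a minimal path cover of `P`, with `p` paths. The cone
over a path with `k` vertices has `fib (2 * k) ≤ φ ^ (2 * k) / √5` spanning trees, so the paths
together contribute at most `φ ^ (2 * n) / √5 ^ p`, and at most `p` edges remain to be added. By
minimality, a remaining edge either has an end that is interior to a path, or joins the two ends of
one path, as otherwise it would merge two paths. In both cases the effective resistance is so small
that the edge contributes a factor below `√5`, bounded away from `√5` except when it closes a long
path. There are few long paths, so a positive proportion of the `p ≥ δ * n` factors of `√5` is lost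
against `φ ^ (2 * n)`, which is up to a constant the number of spanning trees of the fan. An edge
from an interior vertex to a single-vertex path may exceed this bound; the excess is paid for by the
slack of `fib (2 * k) ≤ φ ^ (2 * k) / √5` at `k = 1`.
-/

open Finset
open scoped goldenRatio

section RankOneUpdate

variable {V : Type*} [Fintype V] [DecidableEq V] {M : Matrix V V ℝ}

/-- The quadratic form of `M⁻¹`, which governs the determinants of rank-one updates of `M`; for a
graph Laplacian it measures effective resistances. -/
noncomputable def invForm (M : Matrix V V ℝ) (b : V → ℝ) : ℝ := b ⬝ᵥ M⁻¹ *ᵥ b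

lemma det_add_vecMulVec_self (hM : M.PosDef) (b : V → ℝ) :
    (M + vecMulVec b b).det = M.det * (1 + invForm M b) := by
  rw [vecMulVec_eq Unit, det_add_replicateCol_mul_replicateRow hM.det_pos.ne'.isUnit,
    det_unique (n := Unit), Matrix.mul_assoc, ← replicateCol_mulVec, Matrix.add_apply, one_apply_eq,
    replicateRow_mul_replicateCol_apply, invForm]

lemma invForm_nonneg (hM : M.PosDef) (b : V → ℝ) : 0 ≤ invForm M b := by
  simpa using! hM.inv.posSemidef.dotProduct_mulVec_nonneg b

lemma sq_dotProduct_le_invForm_mul (hM : M.PosDef) (b x : V → ℝ) :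
    (b ⬝ᵥ x) ^ 2 ≤ invForm M b * (x ⬝ᵥ M *ᵥ x) := by
  have hsymm : Mᵀ = M := by simpa using! hM.isHermitian
  have hM_inv : M *ᵥ (M⁻¹ *ᵥ b) = b := by
    rw [mulVec_mulVec, mul_nonsing_inv _ hM.det_pos.ne'.isUnit, one_mulVec]
  have cauchy_schwarz := (M.toBilin').apply_sq_le_of_symm
    (fun y ↦ by simpa [toBilin'_apply'] using! hM.posSemidef.dotProduct_mulVec_nonneg y)
    ⟨fun y z ↦ by
      simp [toBilin'_apply', dotProduct_mulVec, ← mulVec_transpose, hsymm, dotProduct_comm z]⟩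
    (M⁻¹ *ᵥ b) x
  rwa [toBilin'_apply', toBilin'_apply', toBilin'_apply', dotProduct_mulVec, ← mulVec_transpose,
    hsymm, hM_inv, dotProduct_comm _ b] at cauchy_schwarz

lemma invForm_le_of_sq_dotProduct_le (hM : M.PosDef) {b : V → ℝ} {c : ℝ} (hc : 0 ≤ c)
    (h : ∀ x, (b ⬝ᵥ x) ^ 2 ≤ c * (x ⬝ᵥ M *ᵥ x)) : invForm M b ≤ c := by
  have key : invForm M b ^ 2 ≤ c * invForm M b := by
    simpa [invForm, mulVec_mulVec, mul_nonsing_inv, hM.det_pos.ne', dotProduct_comm] using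
      h (M⁻¹ *ᵥ b)
  nlinarith [invForm_nonneg hM b]

lemma invForm_add_add_invForm_sub (M : Matrix V V ℝ) (a b : V → ℝ) :
    invForm M (a + b) + invForm M (a - b) = 2 * (invForm M a + invForm M b) := by
  simp only [invForm, mulVec_add, mulVec_sub, add_dotProduct, dotProduct_add, sub_dotProduct,
    dotProduct_sub]
  ring

end RankOneUpdate

section ConeLaplacian

variable {V : Type*}

/-- The squared difference of `x` along an edge. -/
def sqDiff (x : V → ℝ) : Sym2 V → ℝ :=
  Sym2.lift ⟨fun a b ↦ (x a - x b) ^ 2, fun a b ↦ by ring⟩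

@[simp] lemma sqDiff_mk (x : V → ℝ) (a b : V) : sqDiff x s(a, b) = (x a - x b) ^ 2 := rfl

lemma sqDiff_nonneg (x : V → ℝ) (e : Sym2 V) : 0 ≤ sqDiff x e :=
  e.ind fun _ _ ↦ sq_nonneg _

/-- The Dirichlet energy, on the cone over the graph with edge set `T`, of the potential that is `x`
on the graph and zero at the apex. -/
def coneEnergy [Fintype V] (T : Finset (Sym2 V)) (x : V → ℝ) : ℝ :=
  ∑ v, x v ^ 2 + ∑ e ∈ T, sqDiff x e

variable [DecidableEq V]

/-- The Laplacian matrix of a single edge; it vanishes on loops. -/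
def edgeLaplacian : Sym2 V → Matrix V V ℝ :=
  Sym2.lift ⟨fun a b ↦ vecMulVec (Pi.single a 1 - Pi.single b 1) (Pi.single a 1 - Pi.single b 1),
    fun a b ↦ by
      simp only [← neg_sub (Pi.single b 1 : V → ℝ), neg_vecMulVec, vecMulVec_neg, neg_neg]⟩

/-- The Laplacian of the cone over the graph with edge set `T` (an additional apex is joined to all
vertices), with the row and the column of the apex deleted. -/
def coneLaplacian (T : Finset (Sym2 V)) : Matrix V V ℝ := 1 + ∑ e ∈ T, edgeLaplacian e

variable {T : Finset (Sym2 V)}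

lemma coneLaplacian_insert {e : Sym2 V} (he : e ∉ T) :
    coneLaplacian (insert e T) = coneLaplacian T + edgeLaplacian e := by
  rw [coneLaplacian, coneLaplacian, sum_insert he]
  abel

lemma posSemidef_edgeLaplacian [Finite V] (e : Sym2 V) : (edgeLaplacian e).PosSemidef := by
  induction e with | _ a b
  simpa using! posSemidef_vecMulVec_self_star (Pi.single a 1 - Pi.single b 1 : V → ℝ)

lemma posDef_coneLaplacian [Finite V] (T : Finset (Sym2 V)) : (coneLaplacian T).PosDef :=
  PosDef.one.add_posSemidef (posSemidef_sum T fun e _ ↦ posSemidef_edgeLaplacian e)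

variable [Fintype V]

lemma dotProduct_edgeLaplacian_mulVec (x : V → ℝ) (e : Sym2 V) :
    x ⬝ᵥ edgeLaplacian e *ᵥ x = sqDiff x e := by
  induction e with | _ a b
  simp [edgeLaplacian, vecMulVec_mulVec, sub_dotProduct, dotProduct_sub, sq]

lemma dotProduct_coneLaplacian_mulVec (T : Finset (Sym2 V)) (x : V → ℝ) :
    x ⬝ᵥ coneLaplacian T *ᵥ x = coneEnergy T x := by
  simp only [coneLaplacian, add_mulVec, one_mulVec, sum_mulVec, dotProduct_add, dotProduct_sum,
    dotProduct_edgeLaplacian_mulVec, coneEnergy]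
  simp only [dotProduct, sq]

/-- The effective resistance between the ends of an edge in the cone over `T`. -/
noncomputable def effRes (T : Finset (Sym2 V)) : Sym2 V → ℝ :=
  Sym2.lift ⟨fun u v ↦ invForm (coneLaplacian T) (Pi.single u 1 - Pi.single v 1), fun u v ↦ by
    simp only [← neg_sub (Pi.single v 1 : V → ℝ), invForm, neg_dotProduct, mulVec_neg,
      dotProduct_neg, neg_neg]⟩

/-- The effective resistance between `v` and the apex in the cone over `T`. -/
noncomputable def apexRes (T : Finset (Sym2 V)) (v : V) : ℝ :=
  invForm (coneLaplacian T) (Pi.single v 1)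

lemma effRes_nonneg (T : Finset (Sym2 V)) (e : Sym2 V) : 0 ≤ effRes T e :=
  e.ind fun _ _ ↦ invForm_nonneg (posDef_coneLaplacian T) _

lemma sqDiff_le_effRes_mul_coneEnergy (T : Finset (Sym2 V)) (e : Sym2 V) (x : V → ℝ) :
    sqDiff x e ≤ effRes T e * coneEnergy T x := by
  induction e with | _ a b
  have cauchy_schwarz := sq_dotProduct_le_invForm_mul (posDef_coneLaplacian T)
    (Pi.single a 1 - Pi.single b 1 : V → ℝ) x
  simpa [dotProduct_coneLaplacian_mulVec] using! cauchy_schwarz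

lemma effRes_le_of_sqDiff_le {e : Sym2 V} {c : ℝ} (hc : 0 ≤ c)
    (h : ∀ x, sqDiff x e ≤ c * coneEnergy T x) : effRes T e ≤ c := by
  induction e with | _ a b
  refine invForm_le_of_sq_dotProduct_le (posDef_coneLaplacian T) hc fun x ↦ ?_
  simpa [dotProduct_coneLaplacian_mulVec] using h x

lemma apexRes_le_of_sq_le {v : V} {c : ℝ} (hc : 0 ≤ c)
    (h : ∀ x : V → ℝ, x v ^ 2 ≤ c * coneEnergy T x) : apexRes T v ≤ c := by
  refine invForm_le_of_sq_dotProduct_le (posDef_coneLaplacian T) hc fun x ↦ ?_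
  simpa [dotProduct_coneLaplacian_mulVec] using h x

lemma det_coneLaplacian_insert {e : Sym2 V} (he : e ∉ T) :
    (coneLaplacian (insert e T)).det = (coneLaplacian T).det * (1 + effRes T e) := by
  rw [coneLaplacian_insert he]
  induction e with | _ a b
  exact det_add_vecMulVec_self (posDef_coneLaplacian T) _

lemma det_coneLaplacian_insert_le (T : Finset (Sym2 V)) (e : Sym2 V) :
    (coneLaplacian (insert e T)).det ≤ (coneLaplacian T).det * (1 + effRes T e) := by
  by_cases he : e ∈ T
  · rw [insert_eq_of_mem he]
    nlinarith [effRes_nonneg T e, (posDef_coneLaplacian T).det_pos]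
  · exact (det_coneLaplacian_insert he).le

/-- Replacing a potential by its absolute value does not increase the energy, so the resistance of
`u - v` is at most that of `u + v`; by the parallelogram law the two average to the right side. -/
lemma effRes_le_apexRes_add_apexRes (T : Finset (Sym2 V)) (u v : V) :
    effRes T s(u, v) ≤ apexRes T u + apexRes T v := by
  have hM := posDef_coneLaplacian T
  have coneEnergy_abs_le (x : V → ℝ) : coneEnergy T |x| ≤ coneEnergy T x := by
    refine add_le_add (by simp) (sum_le_sum fun e _ ↦ ?_)
    induction e with | _ a b
    exact sq_le_sq.2 (abs_abs_sub_abs_le _ _)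
  have sub_le_add : effRes T s(u, v) ≤
      invForm (coneLaplacian T) (Pi.single u 1 + Pi.single v 1) := by
    refine effRes_le_of_sqDiff_le (invForm_nonneg hM _) fun x ↦ ?_
    have cauchy_schwarz := sq_dotProduct_le_invForm_mul hM
      (Pi.single u 1 + Pi.single v 1 : V → ℝ) |x|
    calc (x u - x v) ^ 2 ≤ (|x u| + |x v|) ^ 2 := sq_le_sq.2 <|
          (abs_sub _ _).trans (le_abs_self _)
      _ ≤ invForm (coneLaplacian T) (Pi.single u 1 + Pi.single v 1) * coneEnergy T |x| := by
          simpa [dotProduct_coneLaplacian_mulVec] using cauchy_schwarz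
      _ ≤ _ := mul_le_mul_of_nonneg_left (coneEnergy_abs_le x) (invForm_nonneg hM _)
  have parallelogram := invForm_add_add_invForm_sub (coneLaplacian T) (Pi.single u 1 : V → ℝ)
    (Pi.single v 1)
  change invForm _ _ + effRes T s(u, v) = 2 * (apexRes T u + apexRes T v) at parallelogram
  linarith

lemma apexRes_le_of_neighbors {u : V} {N : Finset V} (hu : u ∉ N) (hN : ∀ w ∈ N, s(u, w) ∈ T) :
    apexRes T u ≤ 2 / (#N + 2) := by
  refine apexRes_le_of_sq_le (by positivity) fun x ↦ ?_
  rw [div_mul_eq_mul_div, le_div_iff₀ (by positivity), mul_comm]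
  have vertex_sum : x u ^ 2 + ∑ w ∈ N, x w ^ 2 ≤ ∑ v, x v ^ 2 := by
    rw [← sum_insert (f := fun v ↦ x v ^ 2) hu]
    exact sum_le_univ_sum_of_nonneg fun v ↦ sq_nonneg _
  have edge_sum : ∑ w ∈ N, (x u - x w) ^ 2 ≤ ∑ e ∈ T, sqDiff x e := by
    simp only [← sqDiff_mk]
    rw [← sum_image (g := fun w ↦ s(u, w)) fun _ _ _ _ h ↦ Sym2.congr_right.1 h]
    exact sum_le_sum_of_subset_of_nonneg (image_subset_iff.2 hN) fun e _ _ ↦ sqDiff_nonneg x e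
  have star_sum : #N * x u ^ 2 ≤ 2 * ∑ w ∈ N, (x w ^ 2 + (x u - x w) ^ 2) := by
    rw [← nsmul_eq_mul, ← sum_const, mul_sum]
    exact sum_le_sum fun w _ ↦ by nlinarith [sq_nonneg (x u - 2 * x w)]
  rw [sum_add_distrib] at star_sum
  rw [coneEnergy]
  linarith

end ConeLaplacian

section SpanningTrees

variable {V : Type*} [Fintype V] [DecidableEq V] {T : Finset (Sym2 V)}

lemma edgeLaplacian_apply {e : Sym2 V} (he : ¬ e.IsDiag) (i j : V) :
    edgeLaplacian e i j = if i = j then ∑ k, (if e = s(i, k) then 1 else 0)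
      else -(if e = s(i, j) then 1 else 0) := by
  induction e with | _ a b
  have hab : a ≠ b := he
  have indicator_eq (k : V) : (if s(a, b) = s(i, k) then 1 else 0 : ℝ) =
      (if i = a then if k = b then 1 else 0 else 0) +
        if i = b then if k = a then 1 else 0 else 0 := by
    grind
  simp only [edgeLaplacian, Sym2.lift_mk, vecMulVec_apply, Pi.sub_apply, Pi.single_apply,
    indicator_eq, sum_add_distrib]
  split_ifs <;> simp_all

lemma coneLaplacian_apply (hT : ∀ e ∈ T, ¬ e.IsDiag) (i j : V) :
    coneLaplacian T i j = if i = j then 1 + ∑ k, (if s(i, k) ∈ T then 1 else 0)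
      else -(if s(i, j) ∈ T then 1 else 0) := by
  rw [coneLaplacian, Matrix.add_apply, Matrix.sum_apply,
    sum_congr rfl fun e he ↦ edgeLaplacian_apply (hT e he) i j]
  by_cases hij : i = j
  · simp only [if_pos hij]
    rw [sum_comm, hij, one_apply_eq]
    simp
  · simp [hij]

variable {n : ℕ}

@[simp] lemma starPlusEdges_castSucc_castSucc (T : Finset (Sym2 (Fin n))) (a b : Fin n) :
    starPlusEdges n T a.castSucc b.castSucc = if s(a, b) ∈ T then 1 else 0 := by
  simp [starPlusEdges, starW, Fin.castSucc_ne_last]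

@[simp] lemma starPlusEdges_castSucc_last (T : Finset (Sym2 (Fin n))) (a : Fin n) :
    starPlusEdges n T a.castSucc (Fin.last n) = 1 := by
  simp [starPlusEdges, starW, Fin.castSucc_ne_last, (Fin.castSucc_ne_last _).symm]

lemma nst_starPlusEdges {T : Finset (Sym2 (Fin n))} (hT : ∀ e ∈ T, ¬ e.IsDiag) :
    nst (starPlusEdges n T) = (coneLaplacian T).det := by
  rw [nst]
  congr 1
  ext i j
  rw [coneLaplacian_apply hT]
  simp [lapG, Fin.sum_univ_castSucc, add_comm]

end SpanningTrees

section Fibonacci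

open Nat (fib)

lemma fib_cassini (m : ℕ) :
    (fib (2 * m + 1) : ℝ) ^ 2 = fib (2 * m) * fib (2 * m + 1) + fib (2 * m) ^ 2 + 1 := by
  induction m with
  | zero => simp
  | succ m ih =>
    rw [show 2 * (m + 1) = 2 * m + 2 by ring, Nat.fib_add_two (n := 2 * m + 1), Nat.fib_add_two]
    push_cast
    linarith

lemma goldenRatio_mul_fib_lt (m : ℕ) : φ * fib (2 * m) < fib (2 * m + 1) + 1 := by
  have := Real.fib_succ_sub_goldenRatio_mul_fib (2 * m)
  have : 0 < ψ ^ (2 * m) := (even_two_mul m).pow_pos Real.goldenConj_ne_zero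
  linarith

lemma sqrt_five_mul_fib_le (m : ℕ) : √5 * fib (2 * m) ≤ φ ^ (2 * m) := by
  have : 0 ≤ ψ ^ (2 * m) := (even_two_mul m).pow_nonneg _
  rw [Real.coe_fib_eq, mul_div_cancel₀ _ (by positivity)]
  linarith

lemma goldenRatio_pow_le_fib (n : ℕ) : φ ^ n ≤ fib (n + 2) := by
  induction n using Nat.twoStepInduction with
  | zero => simp
  | one => simpa [Nat.fib_add_two] using Real.goldenRatio_lt_two.le
  | more n ih ih' =>
    rw [Nat.fib_add_two]
    push_cast
    linarith [Real.goldenRatio_pow_sub_goldenRatio_pow n]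

/-- An upper bound for the effective resistance between the two ends of a path with `m` edges in the
cone over it. -/
noncomputable def closingRes (m : ℕ) : ℝ := 2 * fib (2 * m) / (fib (2 * m + 1) + 1)

lemma closingRes_nonneg (m : ℕ) : 0 ≤ closingRes m := by rw [closingRes]; positivity

lemma monotone_closingRes : Monotone closingRes := by
  refine monotone_nat_of_le_succ fun m ↦ ?_
  rw [closingRes, closingRes, div_le_div_iff₀ (by positivity) (by positivity),
    show 2 * (m + 1) = 2 * m + 2 by ring, Nat.fib_add_two (n := 2 * m + 1), Nat.fib_add_two]
  push_cast
  nlinarith [fib_cassini m]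

lemma one_add_closingRes_lt_sqrt_five (m : ℕ) : 1 + closingRes m < √5 := by
  have two_eq : 2 = (√5 - 1) * φ := by
    rw [Real.goldenRatio]
    linear_combination (-1 / 2) * Real.sq_sqrt (show (0 : ℝ) ≤ 5 by simp)
  have one_lt_sqrt_five : 1 < √5 := Real.lt_sqrt_of_sq_lt (by norm_num)
  rw [← lt_sub_iff_add_lt', closingRes, div_lt_iff₀ (by positivity), two_eq, mul_assoc]
  exact mul_lt_mul_of_pos_left (goldenRatio_mul_fib_lt m) (sub_pos.2 one_lt_sqrt_five)

/-- The factor by which the bound `φ ^ (2 * k) / √5` for the number `fib (2 * k)` of spanning trees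
of the fan over a path with `k` vertices overshoots for `k = 1`. -/
noncomputable def singletonGain : ℝ := φ ^ 2 / √5

lemma one_le_singletonGain : 1 ≤ singletonGain := by
  rw [singletonGain, one_le_div (by positivity)]
  simpa using sqrt_five_mul_fib_le 1

/-- The factor charged to an edge that does not join the two ends of a path with more than `K`
vertices. The constant is `13 / 6 = 1 + 1 / 2 + 2 / 3`, where `1 / 2` and `2 / 3` bound the
effective resistances between the apex and a vertex with two neighbors and with one neighbor. -/
noncomputable def shortRate (K : ℕ) : ℝ := max (13 / 6) (1 + closingRes K)

lemma shortRate_pos (K : ℕ) : 0 < shortRate K := lt_max_of_lt_left (by norm_num)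

lemma shortRate_lt_sqrt_five (K : ℕ) : shortRate K < √5 :=
  max_lt (Real.lt_sqrt_of_sq_lt (by norm_num)) (one_add_closingRes_lt_sqrt_five K)

lemma five_halves_le_shortRate_mul_singletonGain (K : ℕ) :
    5 / 2 ≤ shortRate K * singletonGain := by
  have h5 : √5 ^ 2 = 5 := Real.sq_sqrt (by norm_num)
  calc (5 / 2 : ℝ) ≤ 13 / 6 * singletonGain := by
        rw [singletonGain, mul_div_assoc', le_div_iff₀ (by positivity), Real.goldenRatio_sq,
          Real.goldenRatio]
        nlinarith [Real.sqrt_nonneg 5]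
    _ ≤ shortRate K * singletonGain :=
        mul_le_mul_of_nonneg_right (le_max_left _ _) (zero_le_one.trans one_le_singletonGain)

end Fibonacci

section Paths

variable {V : Type*} [DecidableEq V]

/-- The set of edges between consecutive vertices of a list. -/
def pathEdges : List V → Finset (Sym2 V)
  | a :: b :: l => insert s(a, b) (pathEdges (b :: l))
  | _ => ∅

@[simp] lemma pathEdges_nil : pathEdges ([] : List V) = ∅ := rfl

@[simp] lemma pathEdges_singleton (a : V) : pathEdges [a] = ∅ := rfl

@[simp] lemma pathEdges_cons_cons (a b : V) (l : List V) :
    pathEdges (a :: b :: l) = insert s(a, b) (pathEdges (b :: l)) := rfl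

lemma mem_pathEdges {l : List V} {e : Sym2 V} :
    e ∈ pathEdges l ↔ ∃ (i : ℕ) (hi : i + 1 < l.length), s(l[i], l[i + 1]) = e := by
  induction l with
  | nil => simp
  | cons a l ih =>
    cases l with
    | nil => simp
    | cons b l =>
      rw [pathEdges_cons_cons, mem_insert, ih]
      constructor
      · rintro (rfl | ⟨i, hi, rfl⟩)
        · exact ⟨0, by simp, rfl⟩
        · exact ⟨i + 1, by simpa using hi, rfl⟩
      · rintro ⟨_ | i, hi, rfl⟩
        · exact .inl rfl
        · exact .inr ⟨i, by simpa using hi, rfl⟩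

lemma pathEdges_subset_iff {l : List V} {E : Finset (Sym2 V)} :
    pathEdges l ⊆ E ↔ l.IsChain fun a b ↦ s(a, b) ∈ E := by
  induction l with
  | nil => simp
  | cons a l ih => cases l with
    | nil => simp
    | cons b l => rw [pathEdges_cons_cons, insert_subset_iff, ih, List.isChain_cons_cons]

lemma mem_of_mem_pathEdges {l : List V} {e : Sym2 V} (he : e ∈ pathEdges l) {v : V} (hv : v ∈ e) :
    v ∈ l := by
  obtain ⟨i, hi, rfl⟩ := mem_pathEdges.1 he
  obtain rfl | rfl := Sym2.mem_iff.1 hv <;> exact List.getElem_mem _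

lemma notMem_pathEdges_of_notMem {l : List V} {a : V} (ha : a ∉ l) (b : V) :
    s(a, b) ∉ pathEdges l :=
  fun h ↦ ha (mem_of_mem_pathEdges h (Sym2.mem_mk_left a b))

lemma pathEdges_loopless {l : List V} (hl : l.Nodup) : ∀ e ∈ pathEdges l, ¬ e.IsDiag := by
  intro e he hdiag
  obtain ⟨i, hi, rfl⟩ := mem_pathEdges.1 he
  simpa using hl.getElem_inj_iff.1 (Sym2.mk_isDiag_iff.1 hdiag)

/-- The Dirichlet energy of the potential `x` on the cone over the path `l`. -/
def pathEnergy (x : V → ℝ) (l : List V) : ℝ :=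
  ∑ v ∈ l.toFinset, x v ^ 2 + ∑ e ∈ pathEdges l, sqDiff x e

lemma pathEnergy_singleton (x : V → ℝ) (a : V) : pathEnergy x [a] = x a ^ 2 := by
  simp [pathEnergy]

lemma pathEnergy_cons_cons (x : V → ℝ) {a b : V} {l : List V} (ha : a ∉ b :: l) :
    pathEnergy x (a :: b :: l) = x a ^ 2 + (x a - x b) ^ 2 + pathEnergy x (b :: l) := by
  rw [pathEnergy, pathEdges_cons_cons, sum_insert (notMem_pathEdges_of_notMem ha b),
    List.toFinset_cons, sum_insert (by simpa using ha), sqDiff_mk, pathEnergy]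
  ring

lemma fib_mul_sq_head_le_pathEnergy (x : V → ℝ) {a : V} {l : List V} (hl : (a :: l).Nodup) :
    Nat.fib (2 * l.length + 2) * x a ^ 2 ≤ Nat.fib (2 * l.length + 1) * pathEnergy x (a :: l) := by
  induction l generalizing a with
  | nil => simp [pathEnergy_singleton]
  | cons b l ih =>
    have ih := ih hl.of_cons
    rw [pathEnergy_cons_cons x (List.nodup_cons.1 hl).1, List.length_cons, mul_add_one,
      Nat.fib_add_two (n := 2 * l.length + 2), Nat.fib_add_two (n := 2 * l.length + 1)]
    have hF : (0 : ℝ) < Nat.fib (2 * l.length + 1) := by simp [Nat.fib_pos]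
    push_cast
    set p := (Nat.fib (2 * l.length + 1) : ℝ)
    set q := (Nat.fib (2 * l.length + 2) : ℝ)
    have hq : 0 ≤ q := by positivity
    refine le_of_mul_le_mul_left ?_ hF
    nlinarith [sq_nonneg (p * x a - (p + q) * x b),
      mul_le_mul_of_nonneg_left ih (add_nonneg hF.le hq)]

lemma fib_mul_sq_ends_le_pathEnergy (x : V → ℝ) {a : V} {l : List V} (hl : (a :: l).Nodup) :
    Nat.fib (2 * l.length + 1) * (x a ^ 2 + x ((a :: l).getLast (by simp)) ^ 2) -
      2 * x a * x ((a :: l).getLast (by simp)) ≤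
    Nat.fib (2 * l.length) * pathEnergy x (a :: l) := by
  induction l generalizing a with
  | nil => simpa using (by ring : x a ^ 2 + x a ^ 2 = 2 * x a * x a).le
  | cons b l ih =>
    have ih := ih hl.of_cons
    have cassini := fib_cassini l.length
    rw [pathEnergy_cons_cons x (List.nodup_cons.1 hl).1, List.length_cons, mul_add_one,
      Nat.fib_add_two (n := 2 * l.length + 1), Nat.fib_add_two, List.getLast_cons (by simp)]
    obtain rfl | hne := eq_or_ne l []
    · have energy_eq : 2 * (x a ^ 2 + x b ^ 2) =
          x a ^ 2 + (x a - x b) ^ 2 + x b ^ 2 + 2 * x a * x b := by ring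
      simpa [pathEnergy_singleton] using energy_eq.le
    have hF : (0 : ℝ) < Nat.fib (2 * l.length) := by simp [Nat.fib_pos, List.length_pos_iff, hne]
    push_cast
    set p := (Nat.fib (2 * l.length) : ℝ)
    set q := (Nat.fib (2 * l.length + 1) : ℝ)
    set z := x ((b :: l).getLast (by simp))
    have hq : 0 ≤ q := by positivity
    refine le_of_mul_le_mul_left ?_ hF
    nlinarith [sq_nonneg ((p + q) * x b - p * x a - z),
      mul_le_mul_of_nonneg_left ih (add_nonneg hF.le hq)]

variable [Fintype V] {T : Finset (Sym2 V)}

lemma pathEnergy_le_coneEnergy {l : List V} (hT : pathEdges l ⊆ T) (x : V → ℝ) :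
    pathEnergy x l ≤ coneEnergy T x :=
  add_le_add (sum_le_univ_sum_of_nonneg fun v ↦ sq_nonneg (x v))
    (sum_le_sum_of_subset_of_nonneg hT fun e _ _ ↦ sqDiff_nonneg x e)

lemma apexRes_head_le {a : V} {l : List V} (hl : (a :: l).Nodup) (hT : pathEdges (a :: l) ⊆ T) :
    apexRes T a ≤ Nat.fib (2 * l.length + 1) / Nat.fib (2 * l.length + 2) := by
  refine apexRes_le_of_sq_le (by positivity) fun x ↦ ?_
  rw [div_mul_eq_mul_div, le_div_iff₀' (by simp [Nat.fib_pos])]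
  exact (fib_mul_sq_head_le_pathEnergy x hl).trans <|
    mul_le_mul_of_nonneg_left (pathEnergy_le_coneEnergy hT x) (Nat.cast_nonneg _)

lemma effRes_ends_le_closingRes {a : V} {l : List V} (hl : (a :: l).Nodup)
    (hT : pathEdges (a :: l) ⊆ T) :
    effRes T s(a, (a :: l).getLast (by simp)) ≤ closingRes l.length := by
  refine effRes_le_of_sqDiff_le (closingRes_nonneg _) fun x ↦ ?_
  refine le_trans ?_ (mul_le_mul_of_nonneg_left (pathEnergy_le_coneEnergy hT x)
    (closingRes_nonneg _))
  rw [closingRes, div_mul_eq_mul_div, le_div_iff₀ (by positivity), sqDiff_mk]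
  have ends := fib_mul_sq_ends_le_pathEnergy x hl
  have one_le_fib : (1 : ℝ) ≤ Nat.fib (2 * l.length + 1) := by
    exact_mod_cast Nat.fib_pos.2 (Nat.succ_pos _)
  nlinarith [mul_nonneg (sub_nonneg.2 one_le_fib)
    (sq_nonneg (x a + x ((a :: l).getLast (by simp))))]

lemma det_coneLaplacian_pathEdges_union_le (T : Finset (Sym2 V)) {l : List V} (hne : l ≠ [])
    (hl : l.Nodup) :
    (coneLaplacian (pathEdges l ∪ T)).det ≤ Nat.fib (2 * l.length) * (coneLaplacian T).det := by
  induction l with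
  | nil => contradiction
  | cons a l ih => cases l with
    | nil => simp
    | cons b l =>
      have ih := ih (by simp) hl.of_cons
      set U := pathEdges (b :: l) ∪ T
      have effRes_le : effRes U s(a, b) ≤
          1 + Nat.fib (2 * l.length + 1) / Nat.fib (2 * l.length + 2) :=
        (effRes_le_apexRes_add_apexRes U a b).trans <| add_le_add
          (by simpa using apexRes_le_of_neighbors (T := U) (notMem_empty a))
          (apexRes_head_le hl.of_cons subset_union_left)
      rw [pathEdges_cons_cons, insert_union]
      calc (coneLaplacian (insert s(a, b) U)).det
          ≤ (coneLaplacian U).det * (1 + effRes U s(a, b)) := det_coneLaplacian_insert_le _ _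
        _ ≤ (Nat.fib (2 * l.length + 2) * (coneLaplacian T).det) *
            (1 + (1 + Nat.fib (2 * l.length + 1) / Nat.fib (2 * l.length + 2))) := by
          have := (posDef_coneLaplacian T).det_pos
          have := effRes_nonneg U s(a, b)
          exact mul_le_mul ih (by linarith) (by positivity) (by positivity)
        _ = Nat.fib (2 * (a :: b :: l).length) * (coneLaplacian T).det := by
          have : (Nat.fib (2 * l.length + 2) : ℝ) ≠ 0 := by simp
          rw [List.length_cons, List.length_cons, mul_add_one, mul_add_one,
            Nat.fib_add_two (n := 2 * l.length + 2), Nat.fib_add_two (n := 2 * l.length + 1)]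
          push_cast
          field_simp
          ring

end Paths

section Fan

variable {V : Type*} [Fintype V] [DecidableEq V]

lemma coneEnergy_update {T : Finset (Sym2 V)} {x : V → ℝ} {a : V} (hT : ∀ e ∈ T, a ∉ e)
    (hx : x a = 0) (c : ℝ) :
    coneEnergy T (Function.update x a c) = coneEnergy T x + c ^ 2 := by
  have vertex_sum : ∑ v, Function.update x a c v ^ 2 = ∑ v, x v ^ 2 + c ^ 2 := by
    rw [← add_sum_erase _ _ (mem_univ a), ← add_sum_erase univ (fun v ↦ x v ^ 2) (mem_univ a),
      sum_congr rfl fun v hv ↦ by rw [Function.update_of_ne (ne_of_mem_erase hv)]]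
    simp [hx, add_comm]
  have edge_sum : ∑ e ∈ T, sqDiff (Function.update x a c) e = ∑ e ∈ T, sqDiff x e := by
    refine sum_congr rfl fun e he ↦ ?_
    have ha := hT e he
    induction e with | _ u v
    rw [Sym2.mem_iff, not_or] at ha
    simp [ha.1, ha.2, Ne.symm]
  rw [coneEnergy, coneEnergy, vertex_sum, edge_sum, add_right_comm]

/-- The potential is zero off the path and `1, 2, 5, 13, …` along it, ending at `a`. -/
lemma exists_coneEnergy_pathEdges_eq {a : V} {l : List V} (hl : (a :: l).Nodup) :
    ∃ x : V → ℝ, (∀ v ∉ a :: l, x v = 0) ∧ x a = Nat.fib (2 * l.length + 1) ∧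
      coneEnergy (pathEdges (a :: l)) x =
        Nat.fib (2 * l.length + 1) * Nat.fib (2 * l.length + 2) := by
  induction l generalizing a with
  | nil =>
    refine ⟨Pi.single a 1, fun v hv ↦ Pi.single_eq_of_ne (by simpa using hv) 1, by simp, ?_⟩
    simp [coneEnergy, Pi.single_apply]
  | cons b l ih =>
    obtain ⟨x, hx_zero, hxb, hx_energy⟩ := ih hl.of_cons
    have ha := (List.nodup_cons.1 hl).1
    have hba : b ≠ a := fun h ↦ ha (h ▸ List.mem_cons_self)
    refine ⟨Function.update x a (Nat.fib (2 * (b :: l).length + 1)), fun v hv ↦ ?_, by simp, ?_⟩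
    · rw [List.mem_cons, not_or] at hv
      rw [Function.update_of_ne hv.1, hx_zero v hv.2]
    · have energy_update := coneEnergy_update (fun e he h ↦ ha (mem_of_mem_pathEdges he h))
        (hx_zero a ha) (Nat.fib (2 * (b :: l).length + 1))
      rw [coneEnergy, pathEdges_cons_cons, sum_insert (notMem_pathEdges_of_notMem ha b),
        add_left_comm, ← coneEnergy, energy_update, hx_energy, sqDiff_mk, Function.update_self,
        Function.update_of_ne hba, hxb, List.length_cons, mul_add_one,
        Nat.fib_add_two (n := 2 * l.length + 2), Nat.fib_add_two (n := 2 * l.length + 1)]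
      push_cast
      ring

lemma le_one_add_effRes_head {a b : V} {l : List V} (hl : (a :: b :: l).Nodup) :
    (Nat.fib (2 * l.length + 4) : ℝ) ≤
      Nat.fib (2 * l.length + 2) * (1 + effRes (pathEdges (b :: l)) s(a, b)) := by
  obtain ⟨x, hx_zero, hxb, hx_energy⟩ := exists_coneEnergy_pathEdges_eq hl.of_cons
  have ha := (List.nodup_cons.1 hl).1
  have hba : b ≠ a := fun h ↦ ha (h ▸ List.mem_cons_self)
  have sqDiff_le := sqDiff_le_effRes_mul_coneEnergy (pathEdges (b :: l)) s(a, b)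
    (Function.update x a (-Nat.fib (2 * l.length + 2)))
  rw [sqDiff_mk, Function.update_self, Function.update_of_ne hba, hxb, coneEnergy_update
    (fun e he h ↦ ha (mem_of_mem_pathEdges he h)) (hx_zero a ha), hx_energy] at sqDiff_le
  rw [Nat.fib_add_two (n := 2 * l.length + 2), Nat.fib_add_two (n := 2 * l.length + 1)]
  have hpos : (0 : ℝ) < Nat.fib (2 * l.length + 1) + Nat.fib (2 * l.length + 2) := by
    simp [add_pos, Nat.fib_pos]
  push_cast
  nlinarith

lemma fib_le_det_coneLaplacian_pathEdges {l : List V} (hne : l ≠ []) (hl : l.Nodup) :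
    (Nat.fib (2 * l.length) : ℝ) ≤ (coneLaplacian (pathEdges l)).det := by
  induction l with
  | nil => contradiction
  | cons a l ih => cases l with
    | nil => simp [coneLaplacian]
    | cons b l =>
      rw [pathEdges_cons_cons,
        det_coneLaplacian_insert (notMem_pathEdges_of_notMem (List.nodup_cons.1 hl).1 b)]
      exact (le_one_add_effRes_head hl).trans <|
        mul_le_mul_of_nonneg_right (ih (by simp) hl.of_cons) <|
          add_nonneg zero_le_one (effRes_nonneg _ _)

lemma fanW_eq_starPlusEdges (n : ℕ) : fanW n = starPlusEdges n (pathEdges (List.finRange n)) := by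
  have mem_iff (a b : Fin n) : s(a, b) ∈ pathEdges (List.finRange n) ↔
      (a : ℕ) + 1 = b ∨ (b : ℕ) + 1 = a := by
    simp only [mem_pathEdges, List.length_finRange, List.getElem_finRange, Sym2.eq_iff, Fin.ext_iff]
    constructor
    · rintro ⟨i, hi, h | h⟩ <;> simp at h <;> omega
    · rintro (h | h)
      · exact ⟨a, by omega, by simp [h]⟩
      · exact ⟨b, by omega, by simp [h]⟩
  ext i j
  induction i using Fin.lastCases <;> induction j using Fin.lastCases <;>
    simp [fanW, starPlusEdges, Fin.castSucc_ne_last, (Fin.castSucc_ne_last _).symm, mem_iff] <;>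
    omega

lemma nst_fanW (n : ℕ) :
    nst (fanW n) = (coneLaplacian (pathEdges (List.finRange n))).det := by
  rw [fanW_eq_starPlusEdges, nst_starPlusEdges (pathEdges_loopless (List.nodup_finRange n))]

lemma nst_fanW_pos (n : ℕ) : 0 < nst (fanW n) := nst_fanW n ▸ (posDef_coneLaplacian _).det_pos

lemma goldenRatio_pow_le_nst_fanW {n : ℕ} (hn : n ≠ 0) : φ ^ (2 * n) ≤ φ ^ 2 * nst (fanW n) := by
  obtain ⟨k, rfl⟩ := Nat.exists_eq_succ_of_ne_zero hn
  rw [nst_fanW]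
  calc φ ^ (2 * (k + 1)) = φ ^ 2 * φ ^ (2 * k) := by ring
    _ ≤ φ ^ 2 * Nat.fib (2 * (k + 1)) := by gcongr; exact goldenRatio_pow_le_fib (2 * k)
    _ ≤ _ := by
      gcongr
      simpa using fib_le_det_coneLaplacian_pathEdges (l := List.finRange (k + 1)) (by simp)
        (List.nodup_finRange _)

end Fan

section PathFamilies

variable {V : Type*} [DecidableEq V] {Ps : List (List V)}

/-- The set of all edges of the paths in a family. -/
def coverEdges (Ps : List (List V)) : Finset (Sym2 V) := Ps.toFinset.biUnion pathEdges

lemma mem_coverEdges {e : Sym2 V} : e ∈ coverEdges Ps ↔ ∃ l ∈ Ps, e ∈ pathEdges l := by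
  simp [coverEdges]

lemma coverEdges_cons (l : List V) (Ps : List (List V)) :
    coverEdges (l :: Ps) = pathEdges l ∪ coverEdges Ps := by
  simp [coverEdges]

lemma pathEdges_subset_coverEdges {l : List V} (hl : l ∈ Ps) : pathEdges l ⊆ coverEdges Ps :=
  subset_biUnion_of_mem pathEdges (List.mem_toFinset.2 hl)

/-- The edge joining the two ends of a path (a loop if the path is a single vertex). -/
def closingEdge : List V → Option (Sym2 V)
  | [] => none
  | a :: l => some s(a, (a :: l).getLast (List.cons_ne_nil a l))

/-- The edges that join the two ends of a path with more than `K` vertices. -/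
def closingEdges (K : ℕ) (Ps : List (List V)) : Finset (Sym2 V) :=
  ((Ps.filter (K < ·.length)).filterMap closingEdge).toFinset

lemma mem_closingEdges {K : ℕ} {l : List V} {e : Sym2 V} (hl : l ∈ Ps) (hK : K < l.length)
    (he : closingEdge l = some e) : e ∈ closingEdges K Ps := by
  simpa [closingEdges] using ⟨l, ⟨hl, hK⟩, he⟩

lemma card_closingEdges_mul_le (K : ℕ) (Ps : List (List V)) :
    #(closingEdges K Ps) * K ≤ Ps.flatten.length := by
  have card_le : #(closingEdges K Ps) ≤ (Ps.filter (K < ·.length)).length :=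
    (List.toFinset_card_le _).trans (List.length_filterMap_le _ _)
  calc #(closingEdges K Ps) * K ≤ (Ps.filter (K < ·.length)).length * K := by gcongr
    _ ≤ ((Ps.filter (K < ·.length)).map List.length).sum := by
      simpa using List.card_nsmul_le_sum ((Ps.filter (K < ·.length)).map _) K fun m hm ↦ by
        obtain ⟨l, hl, rfl⟩ := List.mem_map.1 hm
        exact (of_decide_eq_true (List.mem_filter.1 hl).2).le
    _ ≤ (Ps.map List.length).sum :=
      (List.filter_sublist.map List.length).sum_le_sum fun _ _ ↦ Nat.zero_le _
    _ = Ps.flatten.length := List.length_flatten.symm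

lemma card_pathEdges_add_one {l : List V} (hne : l ≠ []) (hl : l.Nodup) :
    #(pathEdges l) + 1 = l.length := by
  induction l with
  | nil => contradiction
  | cons a l ih => cases l with
    | nil => simp
    | cons b l =>
      rw [pathEdges_cons_cons,
        card_insert_of_notMem (notMem_pathEdges_of_notMem (List.nodup_cons.1 hl).1 b),
        ih (by simp) hl.of_cons, List.length_cons (a := a)]

lemma card_coverEdges_add_length (hne : ∀ l ∈ Ps, l ≠ []) (hPs : Ps.flatten.Nodup) :
    #(coverEdges Ps) + Ps.length = Ps.flatten.length := by
  induction Ps with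
  | nil => simp [coverEdges]
  | cons l Ps ih =>
    rw [List.flatten_cons, List.nodup_append'] at hPs
    rw [List.forall_mem_cons] at hne
    have disjoint_edges : Disjoint (pathEdges l) (coverEdges Ps) := by
      refine Finset.disjoint_left.2 fun e he he' ↦ ?_
      obtain ⟨l', hl', he'⟩ := mem_coverEdges.1 he'
      have hv := e.out_fst_mem
      exact hPs.2.2 (mem_of_mem_pathEdges he hv)
        (List.mem_flatten_of_mem hl' (mem_of_mem_pathEdges he' hv))
    rw [coverEdges_cons, card_union_of_disjoint disjoint_edges, List.flatten_cons,
      List.length_append, List.length_cons, ← ih hne.2 hPs.2.1,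
      ← card_pathEdges_add_one hne.1 hPs.1]
    ring

variable [Fintype V]

/-- The vertices that form a path of the family by themselves. -/
def singletonVertices (Ps : List (List V)) : Finset V := {v | [v] ∈ Ps}

lemma card_singletonVertices_cons_le (l : List V) (Ps : List (List V)) :
    #(singletonVertices (l :: Ps)) ≤ (if l.length = 1 then 1 else 0) + #(singletonVertices Ps) := by
  have subset_union : singletonVertices (l :: Ps) ⊆
      ({v | [v] = l} : Finset V) ∪ singletonVertices Ps := fun v ↦ by simp [singletonVertices]
  have card_le : #({v | [v] = l} : Finset V) ≤ if l.length = 1 then 1 else 0 := by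
    split_ifs with hl
    · obtain ⟨a, rfl⟩ := List.length_eq_one_iff.1 hl
      simp [filter_eq']
    · refine (card_eq_zero.2 (filter_eq_empty_iff.2 fun v _ hv ↦ hl ?_)).le
      simp [← hv]
  exact (card_le_card subset_union).trans ((card_union_le _ _).trans (by gcongr))

lemma fib_mul_sqrt_five_mul_gain_le (k : ℕ) :
    Nat.fib (2 * k) * (√5 * singletonGain ^ (if k = 1 then 1 else 0)) ≤ φ ^ (2 * k) := by
  split_ifs with hk
  · subst hk
    simp [singletonGain, mul_div_cancel₀]
  · simpa [mul_comm] using sqrt_five_mul_fib_le k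

lemma det_coneLaplacian_coverEdges_mul_le (hne : ∀ l ∈ Ps, l ≠ []) (hPs : Ps.flatten.Nodup) :
    (coneLaplacian (coverEdges Ps)).det *
      (√5 ^ Ps.length * singletonGain ^ #(singletonVertices Ps)) ≤ φ ^ (2 * Ps.flatten.length) := by
  induction Ps with
  | nil => simp [coverEdges, singletonVertices, coneLaplacian]
  | cons l Ps ih =>
    rw [List.flatten_cons, List.nodup_append'] at hPs
    rw [List.forall_mem_cons] at hne
    have ih := ih hne.2 hPs.2.1
    rw [coverEdges_cons, List.length_cons]
    have gain_pos : 0 < singletonGain := zero_lt_one.trans_le one_le_singletonGain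
    have det_pos := (posDef_coneLaplacian (coverEdges Ps)).det_pos
    calc (coneLaplacian (pathEdges l ∪ coverEdges Ps)).det *
          (√5 ^ (Ps.length + 1) * singletonGain ^ #(singletonVertices (l :: Ps)))
        ≤ Nat.fib (2 * l.length) * (coneLaplacian (coverEdges Ps)).det *
          (√5 ^ (Ps.length + 1) * singletonGain ^
            ((if l.length = 1 then 1 else 0) + #(singletonVertices Ps))) := by
          gcongr
          · exact det_coneLaplacian_pathEdges_union_le _ hne.1 hPs.1
          · exact one_le_singletonGain
          · exact card_singletonVertices_cons_le l Ps
      _ = Nat.fib (2 * l.length) * (√5 * singletonGain ^ (if l.length = 1 then 1 else 0)) *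
          ((coneLaplacian (coverEdges Ps)).det *
            (√5 ^ Ps.length * singletonGain ^ #(singletonVertices Ps))) := by ring
      _ ≤ φ ^ (2 * l.length) * φ ^ (2 * Ps.flatten.length) := by
          gcongr
          exact fib_mul_sqrt_five_mul_gain_le _
      _ = φ ^ (2 * (l :: Ps).flatten.length) := by
          rw [List.flatten_cons, List.length_append]; ring

end PathFamilies

section PathCovers

variable {V : Type*}

/-- A vertex is an endpoint of a path if the path starts or ends there. -/
def IsEndpoint (l : List V) (v : V) : Prop := l.head? = some v ∨ l.getLast? = some v

variable {E : Finset (Sym2 V)} {l : List V} {Ps : List (List V)} {u v : V}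

lemma closingEdge_eq_of_isEndpoint (hu : IsEndpoint l u) (hv : IsEndpoint l v) (huv : u ≠ v) :
    closingEdge l = some s(u, v) := by
  cases l with
  | nil => simp [IsEndpoint] at hu
  | cons a l =>
    rw [IsEndpoint, List.head?_cons, List.getLast?_eq_some_getLast (List.cons_ne_nil a l),
      Option.some_inj, Option.some_inj] at hu hv
    obtain ⟨rfl | rfl, rfl | rfl⟩ := And.intro hu hv
    · contradiction
    · rfl
    · exact congrArg some Sym2.eq_swap
    · contradiction

variable [DecidableEq V]

/-- A path cover of the graph with edge set `E` on the vertex set `V`. -/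
structure IsPathCover (E : Finset (Sym2 V)) (Ps : List (List V)) : Prop where
  ne_nil : ∀ l ∈ Ps, l ≠ []
  pathEdges_subset : ∀ l ∈ Ps, pathEdges l ⊆ E
  nodup_flatten : Ps.flatten.Nodup
  mem_flatten : ∀ v, v ∈ Ps.flatten

lemma isPathCoverOf_iff {n : ℕ} {E : Finset (Sym2 (Fin n))} {Ps : List (List (Fin n))} :
    IsPathCoverOf n E Ps ↔ IsPathCover E Ps := by
  constructor
  · rintro ⟨paths, disjoint, cover⟩
    exact ⟨fun l hl ↦ (paths l hl).1, fun l hl ↦ pathEdges_subset_iff.2 (paths l hl).2.2,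
      List.nodup_flatten.2 ⟨fun l hl ↦ (paths l hl).2.1, disjoint⟩,
      fun v ↦ List.mem_flatten.2 (cover v)⟩
  · rintro ⟨ne_nil, subset, nodup, cover⟩
    obtain ⟨nodup, disjoint⟩ := List.nodup_flatten.1 nodup
    exact ⟨fun l hl ↦ ⟨ne_nil l hl, nodup l hl, pathEdges_subset_iff.1 (subset l hl)⟩, disjoint,
      fun v ↦ List.mem_flatten.1 (cover v)⟩

namespace IsPathCover

lemma mono {E' : Finset (Sym2 V)} (hPs : IsPathCover E Ps) (hE : E ⊆ E') : IsPathCover E' Ps :=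
  { hPs with pathEdges_subset := fun l hl ↦ (hPs.pathEdges_subset l hl).trans hE }

lemma coverEdges_subset (hPs : IsPathCover E Ps) : coverEdges Ps ⊆ E :=
  biUnion_subset.2 fun l hl ↦ hPs.pathEdges_subset l (List.mem_toFinset.1 hl)

lemma nodup (hPs : IsPathCover E Ps) (hl : l ∈ Ps) : l.Nodup :=
  (List.nodup_flatten.1 hPs.nodup_flatten).1 l hl

lemma length_flatten [Fintype V] (hPs : IsPathCover E Ps) :
    Ps.flatten.length = Fintype.card V := by
  rw [← List.toFinset_card_of_nodup hPs.nodup_flatten,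
    eq_univ_iff_forall.2 fun v ↦ List.mem_toFinset.2 (hPs.mem_flatten v), card_univ]

lemma perm {Qs : List (List V)} (hPs : IsPathCover E Ps) (h : Ps.Perm Qs) : IsPathCover E Qs where
  ne_nil l hl := hPs.ne_nil l (h.mem_iff.2 hl)
  pathEdges_subset l hl := hPs.pathEdges_subset l (h.mem_iff.2 hl)
  nodup_flatten := h.flatten.nodup_iff.1 hPs.nodup_flatten
  mem_flatten v := h.flatten.mem_iff.1 (hPs.mem_flatten v)

end IsPathCover

lemma exists_minimalFor_isPathCover [Finite V] (E : Finset (Sym2 V)) :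
    ∃ Ps, MinimalFor (IsPathCover E) List.length Ps := by
  cases nonempty_fintype V
  have singletons_cover : IsPathCover E ((univ : Finset V).toList.map ([·])) :=
    { ne_nil := by simp
      pathEdges_subset := by simp
      nodup_flatten := by
        rw [← List.flatMap_def, List.flatMap_singleton']
        exact nodup_toList _
      mem_flatten := by simp }
  exact exists_minimalFor_of_wellFoundedLT _ _ ⟨_, singletons_cover⟩

lemma pathEdges_reverse_subset_iff : pathEdges l.reverse ⊆ E ↔ pathEdges l ⊆ E := by
  simp only [pathEdges_subset_iff, List.isChain_reverse, Sym2.eq_swap]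

lemma exists_perm_getLast?_eq (hv : IsEndpoint l v) (hE : pathEdges l ⊆ E) :
    ∃ l' : List V, l'.Perm l ∧ pathEdges l' ⊆ E ∧ l'.getLast? = some v := by
  obtain hv | hv := hv
  · exact ⟨l.reverse, l.reverse_perm, pathEdges_reverse_subset_iff.2 hE, by simpa using hv⟩
  · exact ⟨l, .rfl, hE, hv⟩

lemma IsPathCover.exists_join {l₁ l₂ : List V} (hPs : IsPathCover E (l₁ :: l₂ :: Ps))
    (hu : IsEndpoint l₁ u) (hv : IsEndpoint l₂ v) (he : s(u, v) ∈ E) :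
    ∃ l, IsPathCover E (l :: Ps) := by
  have ne_nil := hPs.ne_nil
  have subset := hPs.pathEdges_subset
  simp only [List.forall_mem_cons] at ne_nil subset
  obtain ⟨l₁', perm₁, subset₁, last₁⟩ := exists_perm_getLast?_eq hu subset.1
  obtain ⟨l₂', perm₂, subset₂, last₂⟩ := exists_perm_getLast?_eq hv subset.2.1
  have perm : (l₁' ++ l₂'.reverse ++ Ps.flatten).Perm (l₁ :: l₂ :: Ps).flatten := by
    rw [List.flatten_cons, List.flatten_cons, ← List.append_assoc]
    exact (perm₁.append (l₂'.reverse_perm.trans perm₂)).append_right _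
  have join_ne_nil : l₁' ++ l₂'.reverse ≠ [] := fun h ↦ by
    simp [(List.append_eq_nil_iff.1 h).1] at last₁
  have join_subset : pathEdges (l₁' ++ l₂'.reverse) ⊆ E := by
    rw [pathEdges_subset_iff, List.isChain_append, ← pathEdges_subset_iff, ← pathEdges_subset_iff,
      pathEdges_reverse_subset_iff]
    exact ⟨subset₁, subset₂, by simpa [last₁, last₂] using he⟩
  refine ⟨l₁' ++ l₂'.reverse, ?_, ?_, perm.nodup_iff.2 hPs.nodup_flatten,
    fun w ↦ perm.mem_iff.2 (hPs.mem_flatten w)⟩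
  · exact List.forall_mem_cons.2 ⟨join_ne_nil, ne_nil.2.2⟩
  · exact List.forall_mem_cons.2 ⟨join_subset, subset.2.2⟩

lemma eq_of_isEndpoint_of_minimalFor (hPs : MinimalFor (IsPathCover E) List.length Ps)
    {l₁ l₂ : List V} (hl₁ : l₁ ∈ Ps) (hl₂ : l₂ ∈ Ps) (hu : IsEndpoint l₁ u) (hv : IsEndpoint l₂ v)
    (he : s(u, v) ∈ E) : l₁ = l₂ := by
  by_contra hne
  have perm : Ps.Perm (l₁ :: l₂ :: (Ps.erase l₁).erase l₂) :=
    (List.perm_cons_erase hl₁).trans <| .cons _ <|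
      List.perm_cons_erase ((List.mem_erase_of_ne (Ne.symm hne)).2 hl₂)
  obtain ⟨l, hl⟩ := (hPs.prop.perm perm).exists_join hu hv he
  refine hPs.not_lt hl ?_
  rw [perm.length_eq]
  simp

lemma exists_mem_pathEdges_of_ne_singleton (hv : v ∈ l) (hl : l ≠ [v]) :
    ∃ w, s(v, w) ∈ pathEdges l := by
  obtain ⟨i, hi, rfl⟩ := List.mem_iff_getElem.1 hv
  obtain hi' | hi' := lt_or_ge (i + 1) l.length
  · exact ⟨l[i + 1], mem_pathEdges.2 ⟨i, hi', rfl⟩⟩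
  · cases i with
    | zero =>
      obtain ⟨a, rfl⟩ := List.length_eq_one_iff.1 (by omega : l.length = 1)
      exact absurd rfl hl
    | succ i => exact ⟨l[i], mem_pathEdges.2 ⟨i, hi, Sym2.eq_swap⟩⟩

lemma exists_ne_mem_pathEdges_of_not_isEndpoint (hl : l.Nodup) (hv : v ∈ l)
    (hend : ¬ IsEndpoint l v) :
    ∃ w w', w ≠ w' ∧ s(v, w) ∈ pathEdges l ∧ s(v, w') ∈ pathEdges l := by
  obtain ⟨i, hi, rfl⟩ := List.mem_iff_getElem.1 hv
  rw [IsEndpoint, List.head?_eq_getElem?, List.getLast?_eq_getElem?, not_or] at hend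
  have i_ne_zero : i ≠ 0 := by rintro rfl; exact hend.1 (List.getElem?_eq_getElem hi)
  have i_ne_last : i ≠ l.length - 1 := by
    intro h
    exact hend.2 (h ▸ List.getElem?_eq_getElem hi)
  obtain ⟨i, rfl⟩ := Nat.exists_eq_succ_of_ne_zero i_ne_zero
  have hi' : i + 1 + 1 < l.length := by omega
  refine ⟨l[i], l[i + 1 + 1], fun h ↦ ?_, mem_pathEdges.2 ⟨i, hi, Sym2.eq_swap⟩,
    mem_pathEdges.2 ⟨i + 1, hi', rfl⟩⟩
  have := hl.getElem_inj_iff.1 h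
  omega

end PathCovers

section Charging

variable {V : Type*} [DecidableEq V] {E S : Finset (Sym2 V)} {Ps : List (List V)} {u v : V}

/-- The factor by which adding the edge `e` to the paths of the family `Ps` may multiply the number
of spanning trees of the cone, up to the gains of the vertices that are paths by themselves. -/
noncomputable def edgeRate (K : ℕ) (Ps : List (List V)) (e : Sym2 V) : ℝ :=
  if e ∈ closingEdges K Ps then √5 else shortRate K

lemma shortRate_le_edgeRate (K : ℕ) (Ps : List (List V)) (e : Sym2 V) :
    shortRate K ≤ edgeRate K Ps e := by
  rw [edgeRate]
  split_ifs
  · exact (shortRate_lt_sqrt_five K).le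
  · exact le_rfl

lemma edgeRate_pos (K : ℕ) (Ps : List (List V)) (e : Sym2 V) : 0 < edgeRate K Ps e :=
  (shortRate_pos K).trans_le (shortRate_le_edgeRate K Ps e)

lemma prod_edgeRate_le {p : ℕ} (K : ℕ) (Ps : List (List V)) (hS : #S ≤ p) :
    ∏ e ∈ S, edgeRate K Ps e ≤ √5 ^ p * (shortRate K / √5) ^ (p - #(closingEdges K Ps)) := by
  set a := #{e ∈ S | e ∈ closingEdges K Ps}
  have card_add : a + #{e ∈ S | e ∉ closingEdges K Ps} = #S := card_filter_add_card_filter_not _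
  have a_le : a ≤ #(closingEdges K Ps) := card_le_card fun e he ↦ (mem_filter.1 he).2
  have one_le_rate : 1 ≤ shortRate K := le_max_of_le_left (by norm_num)
  have sqrt_pos : 0 < √5 := by positivity
  calc ∏ e ∈ S, edgeRate K Ps e
      = √5 ^ a * shortRate K ^ #{e ∈ S | e ∉ closingEdges K Ps} := by
        simp only [edgeRate, prod_ite, prod_const, a]
    _ ≤ √5 ^ a * shortRate K ^ (p - a) := by gcongr; omega
    _ = √5 ^ p * (shortRate K / √5) ^ (p - a) := by
        rw [div_pow, ← pow_mul_pow_sub √5 (by omega : a ≤ p)]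
        field_simp
    _ ≤ √5 ^ p * (shortRate K / √5) ^ (p - #(closingEdges K Ps)) := by
        gcongr √5 ^ p * ?_
        exact pow_le_pow_of_le_one (div_pos (shortRate_pos K) sqrt_pos).le
          ((div_le_one sqrt_pos).2 (shortRate_lt_sqrt_five K).le) (by omega)

variable [Fintype V]

/-- The vertices that are paths of the family `Ps` by themselves and lie on an edge of `S`. -/
def touchedSingletons (Ps : List (List V)) (S : Finset (Sym2 V)) : Finset V :=
  {v ∈ singletonVertices Ps | ∃ e ∈ S, v ∈ e}

lemma touchedSingletons_subset_insert (Ps : List (List V)) (S : Finset (Sym2 V)) (e : Sym2 V) :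
    touchedSingletons Ps S ⊆ touchedSingletons Ps (insert e S) :=
  monotone_filter_right _ fun _ _ ⟨e', he', hv⟩ ↦ ⟨e', mem_insert_of_mem he', hv⟩

lemma touchedSingletons_ssubset_insert {e : Sym2 V} (hv : [v] ∈ Ps) (hve : v ∈ e)
    (hvS : ∀ e ∈ S, v ∉ e) : touchedSingletons Ps S ⊂ touchedSingletons Ps (insert e S) := by
  refine (ssubset_iff_of_subset (touchedSingletons_subset_insert Ps S e)).2 ⟨v, ?_, ?_⟩
  · simp [touchedSingletons, singletonVertices, hv, hve]
  · simpa [touchedSingletons] using fun _ ↦ hvS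

lemma apexRes_le_one (T : Finset (Sym2 V)) (v : V) : apexRes T v ≤ 1 := by
  simpa using apexRes_le_of_neighbors (T := T) (notMem_empty v)

lemma apexRes_le_two_thirds {T : Finset (Sym2 V)} {e : Sym2 V} (he : e ∈ T) (hdiag : ¬ e.IsDiag)
    (hv : v ∈ e) : apexRes T v ≤ 2 / 3 := by
  obtain ⟨w, rfl⟩ := Sym2.mem_iff_exists.1 hv
  have := apexRes_le_of_neighbors (T := T) (N := {w}) (by simpa using hdiag) (by simpa using he)
  norm_num at this ⊢
  exact this

lemma apexRes_le_half_of_not_isEndpoint {T : Finset (Sym2 V)} {l : List V} (hl : l.Nodup)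
    (hT : pathEdges l ⊆ T) (hv : v ∈ l) (hend : ¬ IsEndpoint l v) : apexRes T v ≤ 1 / 2 := by
  obtain ⟨w, w', hne, hw, hw'⟩ := exists_ne_mem_pathEdges_of_not_isEndpoint hl hv hend
  have notMem : v ∉ ({w, w'} : Finset V) := by
    have := pathEdges_loopless hl _ hw
    have := pathEdges_loopless hl _ hw'
    simp_all
  have hN : ∀ x ∈ ({w, w'} : Finset V), s(v, x) ∈ T := by simp [hT hw, hT hw']
  have := apexRes_le_of_neighbors notMem hN
  rw [card_pair hne] at this
  norm_num at this ⊢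
  exact this

lemma apexRes_le_two_thirds_of_ne_singleton {T : Finset (Sym2 V)} {l : List V} (hl : l.Nodup)
    (hT : pathEdges l ⊆ T) (hv : v ∈ l) (hne : l ≠ [v]) : apexRes T v ≤ 2 / 3 := by
  obtain ⟨w, hw⟩ := exists_mem_pathEdges_of_ne_singleton hv hne
  exact apexRes_le_two_thirds (hT hw) (pathEdges_loopless hl _ hw) (Sym2.mem_mk_left v w)

lemma one_add_effRes_mul_pow_le_of_not_isEndpoint (K : ℕ) (hPs : IsPathCover E Ps)
    (hS : ∀ e ∈ S, ¬ e.IsDiag) {l : List V} (hl : l ∈ Ps) (hu : u ∈ l) (hend : ¬ IsEndpoint l u)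
    (v : V) :
    (1 + effRes (S ∪ coverEdges Ps) s(u, v)) * singletonGain ^ #(touchedSingletons Ps S) ≤
      shortRate K * singletonGain ^ #(touchedSingletons Ps (insert s(u, v) S)) := by
  set T := S ∪ coverEdges Ps
  have subset_T {l : List V} (hl : l ∈ Ps) : pathEdges l ⊆ T :=
    (pathEdges_subset_coverEdges hl).trans subset_union_right
  have gain_pos : 0 < singletonGain := zero_lt_one.trans_le one_le_singletonGain
  have effRes_le : effRes T s(u, v) ≤ 1 / 2 + apexRes T v :=
    (effRes_le_apexRes_add_apexRes T u v).trans <| add_le_add_left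
      (apexRes_le_half_of_not_isEndpoint (hPs.nodup hl) (subset_T hl) hu hend) _
  by_cases hv : [v] ∈ Ps ∧ ∀ e ∈ S, v ∉ e
  · calc (1 + effRes T s(u, v)) * singletonGain ^ #(touchedSingletons Ps S)
        ≤ shortRate K * singletonGain * singletonGain ^ #(touchedSingletons Ps S) := by
          gcongr
          linarith [apexRes_le_one T v, five_halves_le_shortRate_mul_singletonGain K]
      _ = shortRate K * singletonGain ^ (#(touchedSingletons Ps S) + 1) := by ring
      _ ≤ shortRate K * singletonGain ^ #(touchedSingletons Ps (insert s(u, v) S)) := by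
          gcongr
          · exact (shortRate_pos K).le
          · exact one_le_singletonGain
          · exact card_lt_card (touchedSingletons_ssubset_insert hv.1 (Sym2.mem_mk_right u v) hv.2)
  · have apexRes_le : apexRes T v ≤ 2 / 3 := by
      obtain ⟨l', hl', hvl'⟩ := List.mem_flatten.1 (hPs.mem_flatten v)
      by_cases hsingle : l' = [v]
      · subst hsingle
        push Not at hv
        obtain ⟨e, he, hve⟩ := hv hl'
        exact apexRes_le_two_thirds (mem_union_left _ he) (hS e he) hve
      · exact apexRes_le_two_thirds_of_ne_singleton (hPs.nodup hl') (subset_T hl') hvl' hsingle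
    have rate_ge : 13 / 6 ≤ shortRate K := le_max_left _ _
    gcongr
    · linarith
    · exact one_le_singletonGain
    · exact touchedSingletons_subset_insert Ps S _

lemma one_add_effRes_le_edgeRate_of_isEndpoint (K : ℕ) {l : List V} (hl : l ∈ Ps) (hnodup : l.Nodup)
    (hu : IsEndpoint l u) (hv : IsEndpoint l v) (huv : u ≠ v) {T : Finset (Sym2 V)}
    (hT : pathEdges l ⊆ T) : 1 + effRes T s(u, v) ≤ edgeRate K Ps s(u, v) := by
  have closing := closingEdge_eq_of_isEndpoint hu hv huv
  cases l with
  | nil => simp [IsEndpoint] at hu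
  | cons a l =>
    have ends_eq : s(a, (a :: l).getLast (List.cons_ne_nil a l)) = s(u, v) :=
      Option.some_inj.1 closing
    have effRes_le : effRes T s(u, v) ≤ closingRes l.length :=
      ends_eq ▸ effRes_ends_le_closingRes hnodup hT
    obtain hK | hK := lt_or_ge K (a :: l).length
    · rw [edgeRate, if_pos (mem_closingEdges hl hK closing)]
      linarith [one_add_closingRes_lt_sqrt_five l.length]
    · refine le_trans ?_ (shortRate_le_edgeRate K Ps _)
      have := monotone_closingRes ((Nat.le_succ l.length).trans hK)
      exact le_max_of_le_right (by linarith)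

lemma one_add_effRes_mul_pow_le (K : ℕ) (hPs : MinimalFor (IsPathCover E) List.length Ps)
    (hS : ∀ e ∈ S, ¬ e.IsDiag) {e : Sym2 V} (he : e ∈ E) (hdiag : ¬ e.IsDiag) :
    (1 + effRes (S ∪ coverEdges Ps) e) * singletonGain ^ #(touchedSingletons Ps S) ≤
      edgeRate K Ps e * singletonGain ^ #(touchedSingletons Ps (insert e S)) := by
  have gain_pos : 0 < singletonGain := zero_lt_one.trans_le one_le_singletonGain
  induction e with | _ u v =>
  obtain ⟨l₁, hl₁, hu⟩ := List.mem_flatten.1 (hPs.prop.mem_flatten u)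
  obtain ⟨l₂, hl₂, hv⟩ := List.mem_flatten.1 (hPs.prop.mem_flatten v)
  have shortRate_le := mul_le_mul_of_nonneg_right (shortRate_le_edgeRate K Ps s(u, v))
    (pow_pos gain_pos #(touchedSingletons Ps (insert s(u, v) S))).le
  by_cases hu_end : IsEndpoint l₁ u
  · by_cases hv_end : IsEndpoint l₂ v
    · obtain rfl := eq_of_isEndpoint_of_minimalFor hPs hl₁ hl₂ hu_end hv_end he
      have rate_pos := edgeRate_pos K Ps s(u, v)
      gcongr
      · exact one_add_effRes_le_edgeRate_of_isEndpoint K hl₁ (hPs.prop.nodup hl₁) hu_end hv_end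
          (by simpa using hdiag) ((pathEdges_subset_coverEdges hl₁).trans subset_union_right)
      · exact one_le_singletonGain
      · exact touchedSingletons_subset_insert Ps S _
    · rw [Sym2.eq_swap] at shortRate_le ⊢
      exact (one_add_effRes_mul_pow_le_of_not_isEndpoint K hPs.prop hS hl₂ hv hv_end u).trans
        shortRate_le
  · exact (one_add_effRes_mul_pow_le_of_not_isEndpoint K hPs.prop hS hl₁ hu hu_end v).trans
      shortRate_le

lemma det_coneLaplacian_union_coverEdges_le (K : ℕ)
    (hPs : MinimalFor (IsPathCover E) List.length Ps) (hE : ∀ e ∈ E, ¬ e.IsDiag) (hS : S ⊆ E) :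
    (coneLaplacian (S ∪ coverEdges Ps)).det ≤ (coneLaplacian (coverEdges Ps)).det *
      ((∏ e ∈ S, edgeRate K Ps e) * singletonGain ^ #(touchedSingletons Ps S)) := by
  induction S using Finset.induction_on with
  | empty => simp [touchedSingletons]
  | insert e S he ih =>
    rw [insert_subset_iff] at hS
    have charge := one_add_effRes_mul_pow_le K hPs (fun e he ↦ hE e (hS.2 he)) hS.1 (hE e hS.1)
    have det_pos := (posDef_coneLaplacian (coverEdges Ps)).det_pos
    have one_add_nonneg := add_nonneg zero_le_one (effRes_nonneg (S ∪ coverEdges Ps) e)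
    have prod_pos : 0 < ∏ e ∈ S, edgeRate K Ps e := prod_pos fun e _ ↦ edgeRate_pos K Ps e
    calc (coneLaplacian (insert e S ∪ coverEdges Ps)).det
        ≤ (coneLaplacian (S ∪ coverEdges Ps)).det * (1 + effRes (S ∪ coverEdges Ps) e) :=
          insert_union e S _ ▸ det_coneLaplacian_insert_le _ e
      _ ≤ (coneLaplacian (coverEdges Ps)).det *
          ((∏ e ∈ S, edgeRate K Ps e) * singletonGain ^ #(touchedSingletons Ps S)) *
            (1 + effRes (S ∪ coverEdges Ps) e) := by
          gcongr
          exact ih hS.2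
      _ = (coneLaplacian (coverEdges Ps)).det * ((∏ e ∈ S, edgeRate K Ps e) *
          ((1 + effRes (S ∪ coverEdges Ps) e) * singletonGain ^ #(touchedSingletons Ps S))) := by
          ring
      _ ≤ (coneLaplacian (coverEdges Ps)).det * ((∏ e ∈ S, edgeRate K Ps e) *
          (edgeRate K Ps e * singletonGain ^ #(touchedSingletons Ps (insert e S)))) := by
          gcongr
      _ = (coneLaplacian (coverEdges Ps)).det * ((∏ e ∈ insert e S, edgeRate K Ps e) *
          singletonGain ^ #(touchedSingletons Ps (insert e S))) := by
          rw [prod_insert he]; ring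

theorem det_coneLaplacian_le_of_minimalFor (K : ℕ)
    (hPs : MinimalFor (IsPathCover E) List.length Ps) (hE : ∀ e ∈ E, ¬ e.IsDiag)
    (hcard : #E ≤ Fintype.card V) :
    (coneLaplacian E).det ≤ φ ^ (2 * Fintype.card V) *
      (shortRate K / √5) ^ (Ps.length - #(closingEdges K Ps)) := by
  set C := coverEdges Ps
  set S := E \ C
  have union_eq : S ∪ C = E := sdiff_union_of_subset hPs.prop.coverEdges_subset
  have card_C : #C + Ps.length = Fintype.card V := by
    rw [card_coverEdges_add_length hPs.prop.ne_nil hPs.prop.nodup_flatten, hPs.prop.length_flatten]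
  have card_S : #S + #C = #E := card_sdiff_add_card_eq_card hPs.prop.coverEdges_subset
  have det_C := det_coneLaplacian_coverEdges_mul_le hPs.prop.ne_nil hPs.prop.nodup_flatten
  rw [hPs.prop.length_flatten] at det_C
  have det_pos := (posDef_coneLaplacian C).det_pos
  have gain_pos : 0 < singletonGain := zero_lt_one.trans_le one_le_singletonGain
  have ratio_pos : 0 < shortRate K / √5 := div_pos (shortRate_pos K) (by positivity)
  calc (coneLaplacian E).det
      ≤ (coneLaplacian C).det * ((∏ e ∈ S, edgeRate K Ps e) *
        singletonGain ^ #(touchedSingletons Ps S)) :=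
        union_eq ▸ det_coneLaplacian_union_coverEdges_le K hPs hE sdiff_subset
    _ ≤ (coneLaplacian C).det *
        (√5 ^ Ps.length * (shortRate K / √5) ^ (Ps.length - #(closingEdges K Ps)) *
          singletonGain ^ #(singletonVertices Ps)) := by
        gcongr
        · exact prod_edgeRate_le K Ps (by omega)
        · exact one_le_singletonGain
        · exact filter_subset _ _
    _ = (coneLaplacian C).det * (√5 ^ Ps.length * singletonGain ^ #(singletonVertices Ps)) *
        (shortRate K / √5) ^ (Ps.length - #(closingEdges K Ps)) := by ring
    _ ≤ φ ^ (2 * Fintype.card V) * (shortRate K / √5) ^ (Ps.length - #(closingEdges K Ps)) := by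
        gcongr

end Charging

lemma exists_mul_pow_le_inv_one_add_pow {ρ ε : ℝ} (hρ0 : 0 < ρ) (hρ1 : ρ < 1) (hε : 0 < ε) (C : ℝ) :
    ∃ d > 0, ∃ N : ℕ, ∀ n ≥ N, ∀ m : ℕ, ε * n ≤ m → C * ρ ^ m ≤ ((1 + d) ^ n)⁻¹ := by
  -- Half of the decay of `ρ ^ (ε * n)` absorbs the constant `C`.
  set r := ρ ^ (ε / 2)
  have r_pos : 0 < r := Real.rpow_pos_of_pos hρ0 _
  have r_lt_one : r < 1 := Real.rpow_lt_one hρ0.le hρ1 (half_pos hε)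
  have tendsto_zero : Filter.Tendsto (fun n ↦ |C| * r ^ n) .atTop (nhds 0) := by
    simpa using (tendsto_pow_atTop_nhds_zero_of_lt_one r_pos.le r_lt_one).const_mul |C|
  obtain ⟨N, hN⟩ := Filter.eventually_atTop.1 (tendsto_zero.eventually_le_const zero_lt_one)
  refine ⟨r⁻¹ - 1, sub_pos.2 ((one_lt_inv₀ r_pos).2 r_lt_one), N, fun n hn m hm ↦ ?_⟩
  have pow_le : ρ ^ m ≤ r ^ n * r ^ n := by
    rw [← Real.rpow_natCast, ← mul_pow, ← Real.rpow_add hρ0, add_halves, ← Real.rpow_natCast,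
      ← Real.rpow_mul hρ0.le]
    exact Real.rpow_le_rpow_of_exponent_ge hρ0 hρ1.le hm
  rw [add_sub_cancel, inv_pow, inv_inv]
  calc C * ρ ^ m ≤ |C| * (r ^ n * r ^ n) := by
        gcongr
        exact le_abs_self C
    _ = |C| * r ^ n * r ^ n := (mul_assoc _ _ _).symm
    _ ≤ r ^ n := mul_le_of_le_one_left (by positivity) (hN n hn)

lemma card_closingEdges_le {V : Type*} [DecidableEq V] {ε : ℝ} (hε : 0 < ε)
    (Ps : List (List V)) : #(closingEdges ⌈ε⁻¹⌉₊ Ps) ≤ ε * Ps.flatten.length := by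
  rw [← div_le_iff₀' hε, div_eq_mul_inv]
  calc #(closingEdges ⌈ε⁻¹⌉₊ Ps) * ε⁻¹ ≤ (#(closingEdges ⌈ε⁻¹⌉₊ Ps) * ⌈ε⁻¹⌉₊ : ℕ) := by
        push_cast
        gcongr
        exact Nat.le_ceil _
    _ ≤ Ps.flatten.length := by
        exact_mod_cast card_closingEdges_mul_le _ Ps

lemma nst_starPlusEdges_le_mul_nst_fanW {n : ℕ} (hn : n ≠ 0) {P : Finset (Sym2 (Fin n))}
    (hP : ∀ e ∈ P, ¬ e.IsDiag) (hcard : #P ≤ n) (K : ℕ) {Ps : List (List (Fin n))}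
    (hPs : MinimalFor (IsPathCover P) List.length Ps) :
    nst (starPlusEdges n P) ≤
      φ ^ 2 * (shortRate K / √5) ^ (Ps.length - #(closingEdges K Ps)) * nst (fanW n) := by
  have ratio_nonneg : 0 ≤ shortRate K / √5 := div_nonneg (shortRate_pos K).le (by positivity)
  have det_le := det_coneLaplacian_le_of_minimalFor K hPs hP (by rwa [Fintype.card_fin])
  rw [Fintype.card_fin] at det_le
  rw [nst_starPlusEdges hP, mul_right_comm]
  exact det_le.trans (mul_le_mul_of_nonneg_right (goldenRatio_pow_le_nst_fanW hn)
    (pow_nonneg ratio_nonneg _))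

theorem stmt14 (δ : ℝ) (hδ0 : 0 < δ) (hδ1 : δ < 1) :
    ∃ d : ℝ, 0 < d ∧ ∃ N : ℕ, ∀ n : ℕ, N ≤ n →
      ∀ E' : Finset (Sym2 (Fin n)), (∀ e ∈ E', ¬ e.IsDiag) →
        (¬ ∃ Ps : List (List (Fin n)), IsPathCoverOf n E' Ps ∧ (Ps.length : ℝ) < δ * n) →
        ∀ P : Finset (Sym2 (Fin n)), P ⊆ E' → P.card ≤ n - 1 →
          nst (starPlusEdges n P) ≤ ((1 + d) ^ n)⁻¹ * nst (fanW n) := by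
  set K := ⌈(δ / 2)⁻¹⌉₊
  have rate_pos : 0 < shortRate K / √5 := div_pos (shortRate_pos K) (by positivity)
  have rate_lt_one : shortRate K / √5 < 1 :=
    (div_lt_one (by positivity)).2 (shortRate_lt_sqrt_five K)
  obtain ⟨d, hd, N, decay⟩ :=
    exists_mul_pow_le_inv_one_add_pow rate_pos rate_lt_one (half_pos hδ0) (φ ^ 2)
  refine ⟨d, hd, N + 1, fun n hn E' hE' no_cover P hPE' hcard ↦ ?_⟩
  obtain ⟨Ps, hPs⟩ := exists_minimalFor_isPathCover P
  have length_ge : δ * n ≤ Ps.length := not_lt.1 fun h ↦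
    no_cover ⟨Ps, isPathCoverOf_iff.2 (hPs.prop.mono hPE'), h⟩
  have closing_le := card_closingEdges_le (half_pos hδ0) Ps
  rw [hPs.prop.length_flatten, Fintype.card_fin] at closing_le
  have length_le : (Ps.length : ℝ) ≤
      (Ps.length - #(closingEdges K Ps) : ℕ) + #(closingEdges K Ps) := mod_cast le_tsub_add
  refine (nst_starPlusEdges_le_mul_nst_fanW (by omega) (fun e he ↦ hE' e (hPE' he)) (by omega) K
    hPs).trans (mul_le_mul_of_nonneg_right (decay n (by omega) _ (by linarith))
      (nst_fanW_pos n).le)
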